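/- (Helson) Let 𝓔 ⊆ L²(𝕋) be a nonzero closed subspace with z·𝓔 ⊆ 𝓔 and z·𝓔 ≠ 𝓔 (simply invariant). Then there exists F ∈ L²(𝕋) with |F(z)| = 1 for almost every z ∈ 𝕋 such that 𝓔 = F·H²(𝕋). -/

import Mathlib

open MeasureTheory Complex

noncomputable instance : Fact (0 < 2 * Real.pi) := ⟨by positivity⟩

/-!
Let `S` be multiplication by `z`. A unit vector `F ∈ 𝓔 ⊖ S𝓔` is orthogonal to `Sⁿ𝓔` for all
`n ≥ 1`. In particular `⟪F, SⁿF⟫ = 0` for `n ≠ 0`: the Fourier coefficients of `|F|²` vanish away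
from `0`, so `|F| = 1` almost everywhere. If `g ∈ 𝓔` is orthogonal to `SⁿF` for all `n ≥ 0`, then
`⟪F, Sⁿg⟫ = 0` for all `n ∈ ℤ`, so every Fourier coefficient of `F̄g` vanishes and `g = 0`. Hence
the vectors `SⁿF`, `n ≥ 0`, span a dense subspace of `𝓔`. Both vanishing arguments rest on the
uniqueness of Fourier coefficients in `L¹`.
-/

open Filter Topology AddCircle
open scoped ENNReal

section WanderingVectors

variable {𝕜 H : Type*} [RCLike 𝕜] [NormedAddCommGroup H] [InnerProductSpace 𝕜 H]

theorem eq_of_le_of_orthogonal_inf_eq_bot {K E : Submodule 𝕜 H} [K.HasOrthogonalProjection]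
    (hle : K ≤ E) (hbot : Kᗮ ⊓ E = ⊥) : K = E := by
  simpa only [hbot, sup_bot_eq] using Submodule.sup_orthogonal_inf_of_hasOrthogonalProjection hle

theorem exists_mem_orthogonal_norm_eq_one_of_lt {K E : Submodule 𝕜 H}
    [K.HasOrthogonalProjection] (hlt : K < E) : ∃ f ∈ E, f ∈ Kᗮ ∧ ‖f‖ = 1 := by
  have hne : Kᗮ ⊓ E ≠ ⊥ := fun hbot ↦ hlt.ne (eq_of_le_of_orthogonal_inf_eq_bot hlt.le hbot)
  obtain ⟨f, hf, hf0⟩ := Submodule.exists_mem_ne_zero_of_ne_bot hne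
  obtain ⟨hfK, hfE⟩ := (Kᗮ ⊓ E).smul_mem ((‖f‖⁻¹ : ℝ) : 𝕜) hf
  exact ⟨_, hfE, hfK, by simpa using norm_smul_inv_norm (𝕜 := 𝕜) hf0⟩

theorem inner_zpow_left (U : H ≃ₗᵢ[𝕜] H) (n : ℤ) (f g : H) :
    inner 𝕜 ((U ^ n) f) g = inner 𝕜 f ((U ^ (-n)) g) := by
  rw [zpow_neg, LinearIsometryEquiv.coe_inv]
  exact LinearIsometryEquiv.inner_map_eq_flip _ f g

/-- The wandering subspace `E ⊖ U E` of `U` in `E`: when `E` is invariant under `U`, its images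
under the powers of `U` are pairwise orthogonal. Invariance of `E` is not part of the
definition. -/
def wanderingSubspace (U : H ≃ₗᵢ[𝕜] H) (E : Submodule 𝕜 H) : Submodule 𝕜 H :=
  E ⊓ (E.map U.toLinearEquiv.toLinearMap)ᗮ

variable {U : H ≃ₗᵢ[𝕜] H} {E : Submodule 𝕜 H} {f g : H}

theorem exists_mem_wanderingSubspace_norm_eq_one [CompleteSpace H] (hE : IsClosed (E : Set H))
    (hlt : E.map U.toLinearEquiv.toLinearMap < E) : ∃ f ∈ wanderingSubspace U E, ‖f‖ = 1 := by
  have hclosed : IsClosed (E.map U.toLinearEquiv.toLinearMap : Set H) :=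
    U.toHomeomorph.isClosedMap _ hE
  have : CompleteSpace (E.map U.toLinearEquiv.toLinearMap) := hclosed.completeSpace_coe
  obtain ⟨f, hfE, hf, hf1⟩ := exists_mem_orthogonal_norm_eq_one_of_lt hlt
  exact ⟨f, ⟨hfE, hf⟩, hf1⟩

theorem pow_mem_of_mapsTo (hU : Set.MapsTo U E E) (hf : f ∈ E) (n : ℕ) : (U ^ n) f ∈ E := by
  induction n with
  | zero => exact hf
  | succ n ih => rw [pow_succ']; exact hU ih

theorem inner_zpow_eq_zero_of_mem_wanderingSubspace (hU : Set.MapsTo U E E)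
    (hf : f ∈ wanderingSubspace U E) (hg : g ∈ E) {n : ℤ} (hn : 0 < n) :
    inner 𝕜 f ((U ^ n) g) = 0 := by
  lift n to ℕ using hn.le
  obtain ⟨m, rfl⟩ := Nat.exists_eq_add_one_of_ne_zero (by lia : n ≠ 0)
  have hmem : (U ^ (m + 1)) g ∈ E.map U.toLinearEquiv.toLinearMap :=
    ⟨(U ^ m) g, pow_mem_of_mapsTo hU hg m, by rw [pow_succ']; rfl⟩
  rw [zpow_natCast]
  exact Submodule.inner_left_of_mem_orthogonal hmem hf.2

theorem inner_zpow_self_eq_zero_of_mem_wanderingSubspace (hU : Set.MapsTo U E E)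
    (hf : f ∈ wanderingSubspace U E) {n : ℤ} (hn : n ≠ 0) : inner 𝕜 f ((U ^ n) f) = 0 := by
  rcases hn.lt_or_gt with hneg | hpos
  · rw [← neg_neg n, ← inner_zpow_left, inner_eq_zero_symm]
    exact inner_zpow_eq_zero_of_mem_wanderingSubspace hU hf hf.1 (neg_pos.2 hneg)
  · exact inner_zpow_eq_zero_of_mem_wanderingSubspace hU hf hf.1 hpos

theorem topologicalClosure_span_pow_eq_of_mem_wanderingSubspace [CompleteSpace H]
    (hE : IsClosed (E : Set H)) (hU : Set.MapsTo U E E) (hf : f ∈ wanderingSubspace U E)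
    (hcyclic : ∀ g, (∀ n : ℤ, inner 𝕜 f ((U ^ n) g) = 0) → g = 0) :
    (Submodule.span 𝕜 (Set.range fun n : ℕ ↦ (U ^ n) f)).topologicalClosure = E := by
  set K := Submodule.span 𝕜 (Set.range fun n : ℕ ↦ (U ^ n) f)
  have hKE : K.topologicalClosure ≤ E := by
    refine K.topologicalClosure_minimal (Submodule.span_le.2 ?_) hE
    rintro _ ⟨n, rfl⟩
    exact pow_mem_of_mapsTo hU hf.1 n
  refine eq_of_le_of_orthogonal_inf_eq_bot hKE ((Submodule.eq_bot_iff _).2 ?_)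
  rintro g ⟨hgK, hgE⟩
  refine hcyclic g fun n ↦ ?_
  rcases lt_or_ge 0 n with hpos | hnonpos
  · exact inner_zpow_eq_zero_of_mem_wanderingSubspace hU hf hgE hpos
  · obtain ⟨m, rfl⟩ : ∃ m : ℕ, n = -m := ⟨(-n).toNat, by lia⟩
    rw [← inner_zpow_left, zpow_natCast]
    exact Submodule.inner_right_of_mem_orthogonal
      (K.le_topologicalClosure (Submodule.subset_span ⟨m, rfl⟩)) hgK

end WanderingVectors

section FourierUniqueness

variable {E : Type*} [NormedAddCommGroup E]

theorem ae_eq_zero_of_forall_integral_boundedContinuous_smul_eq_zero {X : Type*}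
    [TopologicalSpace X] [HasOuterApproxClosed X] [MeasurableSpace X] [BorelSpace X]
    [NormedSpace ℝ E] [CompleteSpace E] {μ : Measure X} {f : X → E} (hf : Integrable f μ)
    (h : ∀ φ : BoundedContinuousFunction X NNReal, ∫ x, φ x • f x ∂μ = 0) : f =ᵐ[μ] 0 := by
  refine ae_eq_zero_of_forall_setIntegral_isClosed_eq_zero hf fun s hs ↦ ?_
  have hlim : Tendsto (fun n ↦ ∫ x, hs.apprSeq n x • f x ∂μ) atTop
      (𝓝 (∫ x, s.indicator f x ∂μ)) := by
    refine tendsto_integral_of_dominated_convergence (fun x ↦ ‖f x‖)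
      (fun n ↦ (hs.apprSeq n).continuous.aestronglyMeasurable.smul hf.1) hf.norm
      (fun n ↦ ae_of_all _ fun x ↦ ?_) (ae_of_all _ fun x ↦ ?_)
    · rw [NNReal.smul_def, norm_smul, NNReal.norm_eq]
      exact mul_le_of_le_one_left (norm_nonneg _)
        (HasOuterApproxClosed.apprSeq_apply_le_one hs n x)
    · have happr := tendsto_pi_nhds.1 (HasOuterApproxClosed.tendsto_apprSeq hs) x
      simpa only [← Set.indicator_smul_apply_left, one_smul] using happr.smul_const (f x)
  rw [← integral_indicator hs.measurableSet]
  simpa only [h, tendsto_const_nhds_iff, eq_comm] using hlim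

variable {T : ℝ} [Fact (0 < T)] [NormedSpace ℂ E] {f g : AddCircle T → E}

theorem fourierCoeff_sub (hf : Integrable f haarAddCircle) (hg : Integrable g haarAddCircle) :
    fourierCoeff (f - g) = fourierCoeff f - fourierCoeff g := by
  ext n
  simpa only [fourierCoeff, Pi.sub_apply, smul_sub] using
    integral_sub (hf.fourier_smul (-n)) (hg.fourier_smul (-n))

variable [CompleteSpace E]

theorem integral_continuousMap_smul_eq_zero_of_fourierCoeff_eq_zero
    (hf : Integrable f haarAddCircle) (h : fourierCoeff f = 0) (φ : C(AddCircle T, ℂ)) :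
    ∫ θ, φ θ • f θ ∂haarAddCircle = 0 := by
  let Λ : C(AddCircle T, ℂ) →L[ℂ] E :=
    ((ContinuousLinearMap.lsmul ℂ ℂ).lpPairing haarAddCircle ∞ 1).flip
      ((memLp_one_iff_integrable.2 hf).toLp f) ∘L ContinuousMap.toLp ∞ haarAddCircle ℂ
  have hΛ (φ) : Λ φ = ∫ θ, φ θ • f θ ∂haarAddCircle := by
    refine (ContinuousLinearMap.lpPairing_eq_integral _ _ _).trans (integral_congr_ae ?_)
    filter_upwards [ContinuousMap.coeFn_toLp (p := ∞) (𝕜 := ℂ) haarAddCircle φ,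
      (memLp_one_iff_integrable.2 hf).coeFn_toLp] with θ hφ hf
    exact congr_arg₂ (· • ·) hφ hf
  have hΛ0 : Λ = 0 := by
    refine ContinuousLinearMap.ext_on
      (Submodule.dense_iff_topologicalClosure_eq_top.2 span_fourier_closure_eq_top) ?_
    rintro _ ⟨n, rfl⟩
    simpa [hΛ, fourierCoeff] using congr_fun h (-n)
  rw [← hΛ, hΛ0, zero_apply]

theorem ae_eq_zero_of_fourierCoeff_eq_zero (hf : Integrable f haarAddCircle)
    (h : fourierCoeff f = 0) : f =ᵐ[haarAddCircle] 0 :=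
  ae_eq_zero_of_forall_integral_boundedContinuous_smul_eq_zero hf fun φ ↦
    integral_continuousMap_smul_eq_zero_of_fourierCoeff_eq_zero hf h
      ⟨fun θ ↦ ((φ θ : ℝ) : ℂ), by fun_prop⟩

theorem ae_eq_of_fourierCoeff_eq (hf : Integrable f haarAddCircle)
    (hg : Integrable g haarAddCircle) (h : fourierCoeff f = fourierCoeff g) :
    f =ᵐ[haarAddCircle] g :=
  (sub_ae_eq_zero f g).1 <| ae_eq_zero_of_fourierCoeff_eq_zero (hf.sub hg) <| by
    rw [fourierCoeff_sub hf hg, h, sub_self]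

theorem fourierCoeff_const (c : E) : fourierCoeff (T := T) (fun _ ↦ c) = Pi.single 0 c := by
  ext n
  have h := congr_fun (fourierCoeff_fourier (T := T) 0) n
  simp only [fourierCoeff, fourier_zero, smul_eq_mul, mul_one] at h
  rw [fourierCoeff, integral_smul_const, h]
  simp only [Pi.single_apply, ite_smul, one_smul, zero_smul]

end FourierUniqueness

section Shift

variable {T : ℝ} [Fact (0 < T)] {E : Type*} [NormedAddCommGroup E]

section NormedSpace

variable [NormedSpace ℂ E] {p : ℝ≥0∞}

theorem coeFn_holder_lsmul_fourierLp (n : ℤ) (g : Lp E p (haarAddCircle (T := T))) :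
    (ContinuousLinearMap.lsmul ℂ ℂ).holder p (fourierLp ∞ n) g =ᵐ[haarAddCircle]
      fun θ ↦ fourier n θ • g θ := by
  filter_upwards [(ContinuousLinearMap.lsmul ℂ ℂ).coeFn_holder (r := p) (fourierLp ∞ n) g,
    coeFn_fourierLp ∞ n] with θ hmul hfourier
  rw [hmul, hfourier, ContinuousLinearMap.lsmul_apply]

variable [Fact (1 ≤ p)]

/-- Multiplication by the monomial `z ^ n`, as an isometry of `L^p(𝕋)`. -/
noncomputable def fourierMul (n : ℤ) :
    Lp E p (haarAddCircle (T := T)) →ₗᵢ[ℂ] Lp E p (haarAddCircle (T := T)) where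
  toLinearMap := (ContinuousLinearMap.lsmul ℂ ℂ).holderₗ haarAddCircle ∞ p p (fourierLp ∞ n)
  norm_map' g := by
    rw [ContinuousLinearMap.holderₗ_apply_apply, Lp.norm_def, Lp.norm_def]
    refine congr_arg ENNReal.toReal (eLpNorm_congr_norm_ae ?_)
    filter_upwards [coeFn_holder_lsmul_fourierLp n g] with θ hθ
    rw [hθ, norm_smul, fourier_apply, Circle.norm_coe, one_mul]

theorem coeFn_fourierMul (n : ℤ) (g : Lp E p (haarAddCircle (T := T))) :
    fourierMul n g =ᵐ[haarAddCircle] fun θ ↦ fourier n θ • g θ :=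
  coeFn_holder_lsmul_fourierLp n g

theorem fourierMul_zero (g : Lp E p (haarAddCircle (T := T))) : fourierMul 0 g = g := by
  refine Lp.ext ?_
  filter_upwards [coeFn_fourierMul 0 g] with θ hθ
  rw [hθ, fourier_zero, one_smul]

theorem fourierMul_add (m n : ℤ) (g : Lp E p (haarAddCircle (T := T))) :
    fourierMul (m + n) g = fourierMul m (fourierMul n g) := by
  refine Lp.ext ?_
  filter_upwards [coeFn_fourierMul (m + n) g, coeFn_fourierMul m (fourierMul n g),
    coeFn_fourierMul n g] with θ hadd hm hn
  rw [hadd, hm, hn, fourier_add, mul_smul]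

/-- Multiplication by `z`, as an isometric automorphism of `L^p(𝕋)`. -/
noncomputable def bilateralShift :
    Lp E p (haarAddCircle (T := T)) ≃ₗᵢ[ℂ] Lp E p (haarAddCircle (T := T)) where
  __ := fourierMul 1
  invFun := fourierMul (-1)
  left_inv g := (fourierMul_add (-1) 1 g).symm.trans (fourierMul_zero g)
  right_inv g := (fourierMul_add 1 (-1) g).symm.trans (fourierMul_zero g)

theorem bilateralShift_zpow_apply (n : ℤ) (g : Lp E p (haarAddCircle (T := T))) :
    (bilateralShift ^ n) g = fourierMul n g := by
  induction n generalizing g with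
  | zero => exact (fourierMul_zero g).symm
  | succ n ih => rw [zpow_add_one, fourierMul_add, ← ih]; rfl
  | pred n ih => rw [zpow_sub_one, sub_eq_add_neg, fourierMul_add, ← ih]; rfl

theorem coeFn_bilateralShift (g : Lp E p (haarAddCircle (T := T))) :
    bilateralShift g =ᵐ[haarAddCircle] fun θ ↦ fourier 1 θ • g θ :=
  coeFn_fourierMul 1 g

theorem coeFn_bilateralShift_zpow (n : ℤ) (g : Lp E p (haarAddCircle (T := T))) :
    (bilateralShift ^ n) g =ᵐ[haarAddCircle] fun θ ↦ fourier n θ • g θ := by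
  rw [bilateralShift_zpow_apply]
  exact coeFn_fourierMul n g

theorem setOf_ae_eq_mul_fourier_eq_range (f : Lp ℂ p (haarAddCircle (T := T))) :
    {k : Lp ℂ p (haarAddCircle (T := T)) |
      ∃ n : ℕ, k =ᵐ[haarAddCircle] fun θ ↦ f θ * fourier (n : ℤ) θ} =
      Set.range fun n : ℕ ↦ (bilateralShift ^ n) f := by
  ext k
  refine exists_congr fun n ↦ ?_
  have hn : (bilateralShift ^ n) f =ᵐ[haarAddCircle] fun θ ↦ f θ * fourier (n : ℤ) θ := by
    simpa only [zpow_natCast, smul_eq_mul, mul_comm] using coeFn_bilateralShift_zpow n f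
  exact ⟨fun hk ↦ Lp.ext (hn.trans hk.symm), fun hk ↦ hk ▸ hn⟩

end NormedSpace

theorem inner_bilateralShift_zpow [InnerProductSpace ℂ E] (n : ℤ)
    (f g : Lp E 2 (haarAddCircle (T := T))) :
    inner ℂ f ((bilateralShift ^ n) g) = fourierCoeff (fun θ ↦ inner ℂ (f θ) (g θ)) (-n) := by
  rw [L2.inner_def, fourierCoeff, neg_neg]
  refine integral_congr_ae ?_
  filter_upwards [coeFn_bilateralShift_zpow n g] with θ hθ
  rw [hθ, inner_smul_right, smul_eq_mul]

theorem norm_ae_eq_norm_of_inner_bilateralShift_zpow_eq_zero [InnerProductSpace ℂ E]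
    {f : Lp E 2 (haarAddCircle (T := T))}
    (h : ∀ n : ℤ, n ≠ 0 → inner ℂ f ((bilateralShift ^ n) f) = 0) :
    ∀ᵐ θ ∂haarAddCircle, ‖f θ‖ = ‖f‖ := by
  have hcoeff : fourierCoeff (fun θ ↦ inner ℂ (f θ) (f θ)) =
      fourierCoeff (T := T) fun _ ↦ inner ℂ f f := by
    ext n
    rw [← neg_neg n, ← inner_bilateralShift_zpow, fourierCoeff_const]
    rcases eq_or_ne n 0 with rfl | hn
    · simp
    · rw [h _ (neg_ne_zero.2 hn), neg_neg, Pi.single_eq_of_ne hn]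
  filter_upwards [ae_eq_of_fourierCoeff_eq (L2.integrable_inner f f) (integrable_const _) hcoeff]
    with θ hθ
  rw [norm_eq_sqrt_re_inner (𝕜 := ℂ) (f θ), hθ, ← norm_eq_sqrt_re_inner (𝕜 := ℂ) f]

theorem eq_zero_of_inner_bilateralShift_zpow_eq_zero {f g : Lp ℂ 2 (haarAddCircle (T := T))}
    (hf : ∀ᵐ θ ∂haarAddCircle, f θ ≠ 0)
    (h : ∀ n : ℤ, inner ℂ f ((bilateralShift ^ n) g) = 0) : g = 0 := by
  have hcoeff : fourierCoeff (fun θ ↦ inner ℂ (f θ) (g θ)) = 0 := by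
    ext n
    rw [← neg_neg n, ← inner_bilateralShift_zpow, h, Pi.zero_apply]
  rw [Lp.eq_zero_iff_ae_eq_zero]
  filter_upwards [hf, ae_eq_zero_of_fourierCoeff_eq_zero (L2.integrable_inner f g) hcoeff]
    with θ hfθ hθ
  simpa [hfθ] using hθ

end Shift

theorem helson_simply_invariant_general {T : ℝ} [Fact (0 < T)]
    (𝓔 : Submodule ℂ (Lp ℂ 2 (haarAddCircle (T := T))))
    (hclosed : IsClosed (𝓔 : Set (Lp ℂ 2 (haarAddCircle (T := T)))))
    (hinv : ∀ g ∈ 𝓔, ∀ h : Lp ℂ 2 (haarAddCircle (T := T)),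
      (⇑h =ᵐ[haarAddCircle] fun θ => fourier (1 : ℤ) θ * g θ) → h ∈ 𝓔)
    (hsimply : ¬ ∀ g ∈ 𝓔, ∃ g' ∈ 𝓔,
      ⇑g =ᵐ[haarAddCircle] fun θ => fourier (1 : ℤ) θ * g' θ) :
    ∃ F : AddCircle T → ℂ,
      AEStronglyMeasurable F haarAddCircle
      ∧ (∀ᵐ θ ∂haarAddCircle, ‖F θ‖ = 1)
      ∧ (𝓔 : Set (Lp ℂ 2 (haarAddCircle (T := T))))
          = closure (Submodule.span ℂ
              {k : Lp ℂ 2 (haarAddCircle (T := T)) |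
                ∃ n : ℕ, ⇑k =ᵐ[haarAddCircle] fun θ => F θ * fourier (n : ℤ) θ}
            : Set (Lp ℂ 2 (haarAddCircle (T := T)))) := by
  have hmaps : Set.MapsTo bilateralShift 𝓔 𝓔 := fun g hg ↦ hinv g hg _ (coeFn_bilateralShift g)
  have hlt : 𝓔.map bilateralShift.toLinearEquiv.toLinearMap < 𝓔 := by
    refine lt_of_le_not_ge (Submodule.map_le_iff_le_comap.2 hmaps) fun hle ↦ hsimply fun g hg ↦ ?_
    obtain ⟨g', hg', rfl⟩ := hle hg
    exact ⟨g', hg', coeFn_bilateralShift g'⟩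
  obtain ⟨F, hF, hF1⟩ := exists_mem_wanderingSubspace_norm_eq_one hclosed hlt
  have hnorm : ∀ᵐ θ ∂haarAddCircle, ‖F θ‖ = 1 := hF1 ▸
    norm_ae_eq_norm_of_inner_bilateralShift_zpow_eq_zero fun n hn ↦
      inner_zpow_self_eq_zero_of_mem_wanderingSubspace hmaps hF hn
  have hne : ∀ᵐ θ ∂haarAddCircle, F θ ≠ 0 :=
    hnorm.mono fun θ hθ ↦ norm_ne_zero_iff.1 (hθ ▸ one_ne_zero)
  refine ⟨F, Lp.aestronglyMeasurable F, hnorm, ?_⟩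
  rw [setOf_ae_eq_mul_fourier_eq_range, ← Submodule.topologicalClosure_coe,
    topologicalClosure_span_pow_eq_of_mem_wanderingSubspace hclosed hmaps hF fun g ↦
      eq_zero_of_inner_bilateralShift_zpow_eq_zero hne]

/-- Helson's theorem: a nonzero simply invariant closed subspace `𝓔` of `L²(𝕋)`
(i.e. `z·𝓔 ⊆ 𝓔` and `z·𝓔 ≠ 𝓔`) is of the form `F·H²(𝕋)` for a unimodular `F`,
where `F·H²(𝕋)` is the closed span of the functions `F·zⁿ`, `n ≥ 0`. -/
theorem helson_simply_invariant
    (𝓔 : Submodule ℂ (Lp ℂ 2 (AddCircle.haarAddCircle (T := 2 * Real.pi))))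
    (hclosed : IsClosed (𝓔 : Set (Lp ℂ 2 (AddCircle.haarAddCircle (T := 2 * Real.pi)))))
    (hne : 𝓔 ≠ ⊥)
    (hinv : ∀ g ∈ 𝓔, ∀ h : Lp ℂ 2 (AddCircle.haarAddCircle (T := 2 * Real.pi)),
      (⇑h =ᵐ[AddCircle.haarAddCircle] fun θ => fourier (1 : ℤ) θ * g θ) → h ∈ 𝓔)
    (hsimply : ¬ ∀ g ∈ 𝓔, ∃ g' ∈ 𝓔,
      ⇑g =ᵐ[AddCircle.haarAddCircle] fun θ => fourier (1 : ℤ) θ * g' θ) :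
    ∃ F : AddCircle (2 * Real.pi) → ℂ,
      AEStronglyMeasurable F (AddCircle.haarAddCircle)
      ∧ (∀ᵐ θ ∂(AddCircle.haarAddCircle), ‖F θ‖ = 1)
      ∧ (𝓔 : Set (Lp ℂ 2 (AddCircle.haarAddCircle (T := 2 * Real.pi))))
          = closure (Submodule.span ℂ
              {k : Lp ℂ 2 (AddCircle.haarAddCircle (T := 2 * Real.pi)) |
                ∃ n : ℕ, ⇑k =ᵐ[AddCircle.haarAddCircle] fun θ => F θ * fourier (n : ℤ) θ}
            : Set (Lp ℂ 2 (AddCircle.haarAddCircle (T := 2 * Real.pi)))) :=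
  helson_simply_invariant_general 𝓔 hclosed hinv hsimply
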